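/- Let k be an odd positive integer with k ≥ 3, i a positive integer with gcd(i,k) = 1, t a natural number with 0 ≤ t ≤ k−1, e = (2^i + 1)·2^t, F = GaloisField 2 k, and α ∈ F with α ≠ 0 and α ≠ 1. Define V : F × F → F × F by V(x,y) = ((αx + y)^e + x^e, (x + αy)^e + y^e), with components V₁, V₂, and for a, b, c, d ∈ F let W((a,b),(c,d)) = Σ_{x,y ∈ F} χ(Tr(c·V₁(x,y) + d·V₂(x,y) + a·x + b·y)). Then the set of absolute values {|W((a,b),(c,d))| : a, b ∈ F, (c,d) ≠ (0,0)} equals exactly {0, 2^k, 2^(k+1)}; i.e., each of the values 0, 2^k and 2^(k+1) is attained at some ((a,b),(c,d)) with (c,d) ≠ (0,0), and no other absolute values occur. -/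

import Mathlib

noncomputable instance (k : ℕ) : Fintype (GaloisField 2 k) := Fintype.ofFinite _

/-- The absolute trace `Tr(x) = x + x^2 + ⋯ + x^(2^(k-1))` of `GaloisField 2 k`,
computed inside the field (its values lie in the prime subfield `{0, 1}`). -/
noncomputable def absTrace (k : ℕ) (x : GaloisField 2 k) : GaloisField 2 k :=
  ∑ j ∈ Finset.range k, x ^ 2 ^ j

/-- The Walsh transform `W((a,b),(c,d)) = Σ_{x,y} χ(Tr(c·V₁(x,y) + d·V₂(x,y) + ax + by))`
of the closed butterfly `V(x,y) = ((αx+y)^e + x^e, (x+αy)^e + y^e)`, where `χ(0) = 1`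
and `χ(1) = -1`. -/
noncomputable def butterflyWalsh (k e : ℕ) (α a b c d : GaloisField 2 k) : ℤ :=
  haveI := Classical.decEq (GaloisField 2 k)
  ∑ x : GaloisField 2 k, ∑ y : GaloisField 2 k,
    if absTrace k (c * ((α * x + y) ^ e + x ^ e) + d * ((x + α * y) ^ e + y ^ e)
        + a * x + b * y) = 0 then 1 else -1

/-!
Write `σ` for the Frobenius power `x ↦ x ^ 2 ^ i`. Up to the bijection `x ↦ x ^ 2 ^ t` on `(c, d)`,
the Walsh transform is the sum over `F²` of `(-1) ^ Tr (σ(u)ᵀ N u + a u)`, with `N` a `2 × 2` matrix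
depending linearly on `(c, d)`. Such a quadratic sum is zero or has square `|F|²` times the number
of elements of the radical `{u | N u = σ(N)ᵀ σ²(u)}`.

*No other value.* If `N` is invertible, the radical is the equalizer of a linear and a
`σ²`-semilinear map, so it has at most `4` elements, because `σ²` fixes only `0` and `1` (`k` is
odd). If `N` is singular, a nonzero element of the radical would force `σ(JN) JN = 0` for the swap
matrix `J`, which an explicit trace excludes.

*The values `0` and `2 |F|`* occur for `(c, d) = (1, 0)`, where the form splits as
`z σ(z) + x σ(x)` with `z = α x + y`.

*The value `|F|`.* For an invertible `N`, a nonzero `u` in the radical satisfies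
`σ(JN) JN u = σ(det N) σ²(u)`. Iterating, the twisted product `P = σᵏ⁻¹(JN) ⋯ σ(JN) JN` has
`P² u = u` and `det P = 1`, whence `tr P = 0`. For `d = 1`, `tr P` is a combination of the products
`∏ j ∈ S, σʲ(c)` over `S ⊆ {0, …, k - 1}`. These are linearly independent functions of `c`, and the
coefficient at `S = {0}` is `(α + σ(α)) α σ(α) ≠ 0`, so some `c` has a trivial radical.
-/

open Matrix

section SemilinearEqualizer

variable {K V W : Type*} [Field K] [AddCommGroup V] [Module K V] [AddCommGroup W] [Module K W]
  {τ : K →+* K} {f : V →ₛₗ[τ] W} {g : V →ₗ[K] W}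

lemma coeff_mem_fixedPoints_of_semilinear_eq {ι : Type*} [Fintype ι] (hg : Function.Injective g)
    {b : ι → V} (hb : LinearIndependent K b) (hfg : ∀ i, f (b i) = g (b i)) {c : ι → K}
    (hc : f (∑ i, c i • b i) = g (∑ i, c i • b i)) (i : ι) : τ (c i) = c i := by
  have hτc : ∑ i, τ (c i) • b i = ∑ i, c i • b i := by
    apply hg
    rw [← hc]
    simp only [map_sum, map_smul, LinearMap.map_smulₛₗ, hfg]
  exact congrFun (hb.fintypeLinearCombination_injective hτc) i

theorem ncard_semilinear_eq_le [FiniteDimensional K V] (hg : Function.Injective g)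
    (hτ : (Function.fixedPoints τ).Finite) :
    {v | f v = g v}.ncard ≤ (Function.fixedPoints τ).ncard ^ Module.finrank K V := by
  obtain ⟨b, hbS, hspan, hb⟩ := exists_linearIndependent K {v | f v = g v}
  have : Finite b := hb.finite
  have := Fintype.ofFinite b
  have := hτ.to_subtype
  have := Fintype.ofFinite (Function.fixedPoints τ)
  have hsurj : {v | f v = g v} ⊆
      Set.range fun c : b → Function.fixedPoints τ => ∑ v, (c v : K) • (v : V) := by
    intro v hv
    have hvb : v ∈ Submodule.span K (Set.range ((↑) : b → V)) := by
      rw [Subtype.range_coe, hspan]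
      exact Submodule.subset_span hv
    obtain ⟨c, rfl⟩ := (Submodule.mem_span_range_iff_exists_fun K).1 hvb
    exact ⟨fun v => ⟨c v, coeff_mem_fixedPoints_of_semilinear_eq hg hb (fun v => hbS v.2) hv v⟩,
      rfl⟩
  have hpos : 0 < (Function.fixedPoints τ).ncard :=
    (Set.ncard_pos hτ).2 ⟨0, map_zero τ⟩
  calc {v | f v = g v}.ncard
      ≤ Nat.card (b → Function.fixedPoints τ) :=
        (Set.ncard_le_ncard hsurj (Set.finite_range _)).trans (Finite.card_range_le _)
    _ = (Function.fixedPoints τ).ncard ^ Fintype.card b := by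
        rw [Nat.card_fun, Nat.card_coe_set_eq, Nat.card_eq_fintype_card]
    _ ≤ _ := Nat.pow_le_pow_right hpos hb.fintype_card_le_finrank

end SemilinearEqualizer

/-- `f` is a quadratic function from `G` to the signs `±1`, written multiplicatively: it is a
homomorphism up to the bicharacter `B`, its polarization. -/
structure IsQuadraticSign {G : Type*} [AddCommGroup G] (f : G → ℤ) (B : G → AddChar G ℤ) :
    Prop where
  mul_self : ∀ u, f u * f u = 1
  map_add : ∀ u v, f (u + v) = f u * f v * B u v

namespace IsQuadraticSign

variable {G : Type*} [AddCommGroup G] {f : G → ℤ} {B : G → AddChar G ℤ}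

lemma map_zero (hf : IsQuadraticSign f B) : f 0 = 1 := by
  have h := hf.map_add 0 0
  rwa [add_zero, hf.mul_self, AddChar.map_zero_eq_one, one_mul] at h

variable [Fintype G]

lemma sum_eq_zero (hf : IsQuadraticSign f B) {h : G} (hBh : B h = 1) (hfh : f h ≠ 1) :
    ∑ u, f u = 0 := by
  have hshift : ∑ u, f u = f h * ∑ u, f u :=
    calc ∑ u, f u = ∑ u, f (h + u) := (Equiv.sum_comp (Equiv.addLeft h) f).symm
      _ = f h * ∑ u, f u := by simp [hf.map_add, hBh, Finset.mul_sum]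
  exact (mul_left_eq_self₀.1 hshift.symm).resolve_left hfh

open scoped Classical in
lemma sum_sq (hf : IsQuadraticSign f B) :
    (∑ u, f u) ^ 2 = Fintype.card G * ∑ h with B h = 1, f h := by
  have hsum_shift (u : G) : ∑ v, f v * f u = ∑ h, f h * B h u := by
    rw [← Equiv.sum_comp (Equiv.addRight u)]
    refine Finset.sum_congr rfl fun h _ => ?_
    rw [Equiv.coe_addRight, hf.map_add]
    linear_combination f h * B h u * hf.mul_self u
  calc (∑ u, f u) ^ 2 = ∑ u, ∑ h, f h * B h u := by
        rw [sq, Finset.sum_mul_sum, Finset.sum_comm]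
        exact Finset.sum_congr rfl fun u _ => hsum_shift u
    _ = ∑ h, f h * ∑ u, B h u := by
        rw [Finset.sum_comm]
        exact Finset.sum_congr rfl fun h _ => (Finset.mul_sum ..).symm
    _ = Fintype.card G * ∑ h with B h = 1, f h := by
        rw [Finset.sum_filter, Finset.mul_sum]
        refine Finset.sum_congr rfl fun h _ => ?_
        split_ifs with hBh
        · simp [hBh, mul_comm]
        · rw [AddChar.sum_eq_zero_of_ne_one hBh, mul_zero, mul_zero]

lemma sum_sq_of_eq_one (hf : IsQuadraticSign f B) (hrad : ∀ h, B h = 1 → f h = 1) :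
    (∑ u, f u) ^ 2 = Fintype.card G * {h | B h = 1}.ncard := by
  classical
  have hsum : ∑ h with B h = 1, f h = ({h | B h = 1}.ncard : ℤ) := by
    rw [Finset.sum_congr rfl fun h hh => hrad h (Finset.mem_filter.1 hh).2,
      Set.ncard_eq_toFinset_card']
    simp
  rw [hf.sum_sq, hsum]

lemma sum_eq_zero_or_sum_sq (hf : IsQuadraticSign f B) :
    ∑ u, f u = 0 ∨ (∑ u, f u) ^ 2 = Fintype.card G * {h | B h = 1}.ncard := by
  by_cases hrad : ∀ h, B h = 1 → f h = 1
  · exact .inr (hf.sum_sq_of_eq_one hrad)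
  · push Not at hrad
    obtain ⟨h, hBh, hfh⟩ := hrad
    exact .inl (hf.sum_eq_zero hBh hfh)

end IsQuadraticSign

section TwistedForm

variable {F ι : Type*} [Field F] [Fintype ι]

/-- The value at `u` of the character `χ` composed with the quadratic function
`∑ i j, N i j * σ (u i) * u j + ∑ i, a i * u i` attached to a matrix `N` and a field
endomorphism `σ`. -/
def twistedQuadSign (χ : AddChar F ℤ) (σ : F →+* F) (N : Matrix ι ι F) (a u : ι → F) : ℤ :=
  χ ((σ ∘ u) ⬝ᵥ N *ᵥ u + a ⬝ᵥ u)

/-- The character `v ↦ χ (∑ i, σ (v i) * w i)`; polarizations of `twistedQuadSign` are of this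
form. -/
def twistedChar (χ : AddChar F ℤ) (σ : F →+* F) (w : ι → F) : AddChar (ι → F) ℤ where
  toFun v := χ ((σ ∘ v) ⬝ᵥ w)
  map_zero_eq_one' := by simp [dotProduct]
  map_add_eq_mul' v v' := by
    rw [← AddChar.map_add_eq_mul, ← add_dotProduct]
    congr 2
    ext i
    simp

lemma twistedChar_apply (χ : AddChar F ℤ) (σ : F →+* F) (w v : ι → F) :
    twistedChar χ σ w v = χ ((σ ∘ v) ⬝ᵥ w) := rfl

lemma twistedChar_zero (χ : AddChar F ℤ) (σ : F →+* F) :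
    twistedChar χ σ (0 : ι → F) = 1 := by
  ext v
  simp [twistedChar_apply]

lemma twistedChar_eq_one_iff {χ : AddChar F ℤ} {σ : F →+* F} (hχ : χ ≠ 1)
    (hσ : Function.Surjective σ) {w : ι → F} : twistedChar χ σ w = 1 ↔ w = 0 := by
  classical
  refine ⟨fun h => ?_, fun h => h ▸ twistedChar_zero χ σ⟩
  ext i
  by_contra hwi
  refine AddChar.IsPrimitive.of_ne_one hχ hwi ?_
  ext x
  obtain ⟨y, rfl⟩ := hσ x
  have hi := DFunLike.congr_fun h (Pi.single i y)
  have hcomp : σ ∘ Pi.single i y = Pi.single i (σ y) := by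
    ext j
    simp [Pi.single_apply, apply_ite σ]
  rwa [twistedChar_apply, hcomp, single_dotProduct, mul_comm, ← AddChar.mulShift_apply] at hi

/-- The radical of the polarization of `u ↦ ∑ i j, N i j * σ (u i) * u j`, once composed with a
nontrivial `σ`-invariant character. -/
def twistedRadical (σ : F →+* F) (N : Matrix ι ι F) : Set (ι → F) :=
  {u | N *ᵥ u + (N.map σ)ᵀ *ᵥ (σ ∘ σ ∘ u) = 0}

lemma zero_mem_twistedRadical (σ : F →+* F) (N : Matrix ι ι F) : 0 ∈ twistedRadical σ N := by
  simp [twistedRadical]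

lemma setOf_twistedChar_eq_one [Finite F] {χ : AddChar F ℤ} (hχ : χ ≠ 1) {σ : F →+* F}
    {N : Matrix ι ι F} :
    {u | twistedChar χ σ (N *ᵥ u + (N.map σ)ᵀ *ᵥ (σ ∘ σ ∘ u)) = 1} = twistedRadical σ N :=
  Set.ext fun _ => twistedChar_eq_one_iff hχ (Finite.surjective_of_injective σ.injective)

lemma isQuadraticSign_twistedQuadSign {χ : AddChar F ℤ} {σ : F →+* F}
    (hχσ : ∀ x, χ (σ x) = χ x) (N : Matrix ι ι F) (a : ι → F) :
    IsQuadraticSign (twistedQuadSign χ σ N a)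
      fun u => twistedChar χ σ (N *ᵥ u + (N.map σ)ᵀ *ᵥ (σ ∘ σ ∘ u)) where
  mul_self u := by
    rcases Int.isUnit_iff.1 (χ.val_isUnit ((σ ∘ u) ⬝ᵥ N *ᵥ u + a ⬝ᵥ u)) with h | h <;>
      simp [twistedQuadSign, h]
  map_add u v := by
    have hcross : χ ((σ ∘ u) ⬝ᵥ N *ᵥ v) = χ ((σ ∘ v) ⬝ᵥ (N.map σ)ᵀ *ᵥ (σ ∘ σ ∘ u)) := by
      have hNv : σ ∘ (N *ᵥ v) = N.map σ *ᵥ (σ ∘ v) := funext (σ.map_mulVec N v)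
      rw [← hχσ, RingHom.map_dotProduct, hNv, dotProduct_mulVec, dotProduct_comm,
        ← mulVec_transpose]
    have hσuv : σ ∘ (u + v) = σ ∘ u + σ ∘ v := by ext; simp
    simp only [twistedQuadSign, twistedChar_apply, hσuv, mulVec_add, dotProduct_add,
      add_dotProduct, AddChar.map_add_eq_mul, hcross]
    ring

section Sum

variable [Fintype F] [DecidableEq ι] {χ : AddChar F ℤ} {σ : F →+* F} {N : Matrix ι ι F}
  {a : ι → F}

lemma sum_twistedQuadSign_eq_zero (hχσ : ∀ x, χ (σ x) = χ x) {u : ι → F}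
    (hu : u ∈ twistedRadical σ N) (hau : twistedQuadSign χ σ N a u ≠ 1) :
    ∑ v, twistedQuadSign χ σ N a v = 0 :=
  (isQuadraticSign_twistedQuadSign hχσ N a).sum_eq_zero
    ((congrArg _ hu).trans (twistedChar_zero χ σ)) hau

lemma sum_twistedQuadSign_sq_of_eq_one (hχ : χ ≠ 1) (hχσ : ∀ x, χ (σ x) = χ x)
    (hrad : ∀ u ∈ twistedRadical σ N, twistedQuadSign χ σ N a u = 1) :
    (∑ v, twistedQuadSign χ σ N a v) ^ 2 =
      (Fintype.card F : ℤ) ^ Fintype.card ι * (twistedRadical σ N).ncard := by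
  rw [← setOf_twistedChar_eq_one hχ] at hrad
  rw [(isQuadraticSign_twistedQuadSign hχσ N a).sum_sq_of_eq_one hrad,
    setOf_twistedChar_eq_one hχ, Fintype.card_fun, Nat.cast_pow]

lemma sum_twistedQuadSign_eq_zero_or_sq (hχ : χ ≠ 1) (hχσ : ∀ x, χ (σ x) = χ x)
    (N : Matrix ι ι F) (a : ι → F) :
    ∑ v, twistedQuadSign χ σ N a v = 0 ∨ (∑ v, twistedQuadSign χ σ N a v) ^ 2 =
      (Fintype.card F : ℤ) ^ Fintype.card ι * (twistedRadical σ N).ncard := by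
  have h := (isQuadraticSign_twistedQuadSign hχσ N a).sum_eq_zero_or_sum_sq
  rwa [setOf_twistedChar_eq_one hχ, Fintype.card_fun, Nat.cast_pow] at h

lemma sum_twistedQuadSign_sq_of_twistedRadical_subset (hχ : χ ≠ 1) (hχσ : ∀ x, χ (σ x) = χ x)
    (hN : twistedRadical σ N ⊆ {0}) (a : ι → F) :
    (∑ u, twistedQuadSign χ σ N a u) ^ 2 = (Fintype.card F : ℤ) ^ Fintype.card ι := by
  have hrad : twistedRadical σ N = {0} :=
    hN.antisymm (Set.singleton_subset_iff.2 (zero_mem_twistedRadical σ N))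
  rw [sum_twistedQuadSign_sq_of_eq_one hχ hχσ, hrad, Set.ncard_singleton, Nat.cast_one, mul_one]
  intro u hu
  rw [Set.mem_singleton_iff.1 (hN hu)]
  exact (isQuadraticSign_twistedQuadSign hχσ N a).map_zero

end Sum

lemma ncard_twistedRadical_le [DecidableEq ι] {σ : F →+* F} {N : Matrix ι ι F} (hN : N.det ≠ 0)
    (hσ : (Function.fixedPoints (σ.comp σ)).Finite) :
    (twistedRadical σ N).ncard ≤ (Function.fixedPoints (σ.comp σ)).ncard ^ Fintype.card ι := by
  let f : (ι → F) →ₛₗ[σ.comp σ] (ι → F) :=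
    { toFun u := -((N.map σ)ᵀ *ᵥ (σ ∘ σ ∘ u))
      map_add' u v := by
        have : σ ∘ σ ∘ (u + v) = σ ∘ σ ∘ u + σ ∘ σ ∘ v := by ext; simp
        rw [this, mulVec_add, neg_add]
      map_smul' r u := by
        have : σ ∘ σ ∘ (r • u) = σ.comp σ r • (σ ∘ σ ∘ u) := by ext; simp
        rw [this, mulVec_smul, smul_neg] }
  have hrad : twistedRadical σ N = {u | f u = N.mulVecLin u} := by
    ext u
    simp only [twistedRadical, Set.mem_ofPred_eq, f, LinearMap.coe_mk, AddHom.coe_mk,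
      mulVecLin_apply]
    rw [add_eq_zero_iff_eq_neg, eq_comm]
  rw [hrad, ← Module.finrank_fintype_fun_eq_card F]
  exact ncard_semilinear_eq_le (mulVec_injective_iff_isUnit.2 (N.isUnit_iff_isUnit_det.2
    hN.isUnit)) hσ

end TwistedForm

section CharTwoPlane

variable {F : Type*} [Field F]

/-- The Gram matrix of the symplectic form on `F²` in characteristic two, where the usual sign
disappears. -/
def swapMatrix (F : Type*) [Field F] : Matrix (Fin 2) (Fin 2) F := !![0, 1; 1, 0]

lemma swapMatrix_mul_self : swapMatrix F * swapMatrix F = 1 := by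
  simp [swapMatrix, one_fin_two]

lemma swapMatrix_map (σ : F →+* F) : (swapMatrix F).map σ = swapMatrix F := by
  ext i j
  fin_cases i <;> fin_cases j <;> simp [swapMatrix]

lemma swapMatrix_mulVec_eq_zero {v : Fin 2 → F} : swapMatrix F *ᵥ v = 0 ↔ v = 0 := by
  refine ⟨fun h => ?_, fun h => by rw [h, mulVec_zero]⟩
  rw [← one_mulVec v, ← swapMatrix_mul_self, ← mulVec_mulVec, h, mulVec_zero]

variable [CharP F 2]

lemma mul_swapMatrix_mul_transpose (A : Matrix (Fin 2) (Fin 2) F) :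
    A * swapMatrix F * Aᵀ = A.det • swapMatrix F := by
  ext i j
  fin_cases i <;> fin_cases j <;>
    simp only [swapMatrix, Fin.zero_eta, Fin.mk_one, mul_apply, of_apply, cons_val',
      cons_val_fin_one, Fin.sum_univ_two, cons_val_zero, cons_val_one, transpose_apply, det_fin_two,
      Matrix.smul_apply, smul_eq_mul] <;> grind

lemma mul_swapMatrix_mul_eq_zero {P N : Matrix (Fin 2) (Fin 2) F} {w : Fin 2 → F} (hw : w ≠ 0)
    (hP : P *ᵥ w = 0) (hN : w ᵥ* N = 0) : P * (swapMatrix F * N) = 0 := by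
  have hw' : w 0 ≠ 0 ∨ w 1 ≠ 0 := by
    by_contra! h
    exact hw (by ext i; fin_cases i; exacts [h.1, h.2])
  ext i j
  have hPi : P i 0 * w 0 + P i 1 * w 1 = 0 := by
    simpa [mulVec, dotProduct, Fin.sum_univ_two] using congrFun hP i
  have hNj : w 0 * N 0 j + w 1 * N 1 j = 0 := by
    simpa [vecMul, dotProduct, Fin.sum_univ_two] using congrFun hN j
  have hPN : P i 0 * N 1 j + P i 1 * N 0 j = 0 := by grind
  simpa [swapMatrix, mul_apply, vecMul, Fin.sum_univ_two, vecHead, vecTail] using hPN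

variable {σ : F →+* F} {N : Matrix (Fin 2) (Fin 2) F} {u : Fin 2 → F}

lemma mulVec_eq_of_mem_twistedRadical (hu : u ∈ twistedRadical σ N) :
    N *ᵥ u = (N.map σ)ᵀ *ᵥ (σ ∘ σ ∘ u) := by
  rw [← sub_eq_zero, CharTwo.sub_eq_add]
  exact hu

lemma mulVec_mulVec_of_mem_twistedRadical (hu : u ∈ twistedRadical σ N) :
    (swapMatrix F * N).map σ *ᵥ (swapMatrix F * N) *ᵥ u = σ N.det • (σ ∘ σ ∘ u) := by
  rw [← mulVec_mulVec, mulVec_eq_of_mem_twistedRadical hu, Matrix.map_mul, swapMatrix_map,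
    mulVec_mulVec, mulVec_mulVec, mul_assoc (swapMatrix F), mul_assoc (swapMatrix F),
    mul_swapMatrix_mul_transpose, Matrix.mul_smul, swapMatrix_mul_self, smul_mulVec, one_mulVec,
    σ.map_det]
  rfl

lemma twistedRadical_subset_of_det_eq_zero (hdet : N.det = 0)
    (hN : (swapMatrix F * N).map σ * (swapMatrix F * N) ≠ 0) : twistedRadical σ N ⊆ {0} := by
  intro u hu
  by_contra hu0
  refine hN ?_
  by_cases hNu : N *ᵥ u = 0
  · have hσu : σ ∘ u ≠ 0 := fun h => hu0 <| funext fun i => by simpa using congrFun h i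
    refine mul_swapMatrix_mul_eq_zero hσu ?_ ?_
    · have : σ ∘ ((swapMatrix F * N) *ᵥ u) = (swapMatrix F * N).map σ *ᵥ (σ ∘ u) :=
        funext (σ.map_mulVec _ u)
      rw [← this, ← mulVec_mulVec, hNu, mulVec_zero]
      ext; simp
    · have hσN : Nᵀ.map σ *ᵥ (σ ∘ σ ∘ u) = 0 := by
        rw [transpose_map, ← mulVec_eq_of_mem_twistedRadical hu, hNu]
      rw [← mulVec_transpose]
      ext i
      have hi := congrFun hσN i
      rw [← σ.map_mulVec] at hi
      simpa using hi
  · refine mul_swapMatrix_mul_eq_zero (w := (swapMatrix F * N) *ᵥ u) ?_ ?_ ?_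
    · rwa [← mulVec_mulVec, Ne, swapMatrix_mulVec_eq_zero]
    · rw [mulVec_mulVec_of_mem_twistedRadical hu, hdet, map_zero, zero_smul]
    · have h := mul_swapMatrix_mul_transpose Nᵀ
      rw [transpose_transpose, det_transpose, hdet, zero_smul] at h
      rw [← mulVec_transpose, mulVec_mulVec, ← mul_assoc, h, zero_mulVec]

end CharTwoPlane

section ButterflyMatrix

variable {F : Type*} [Field F] {σ : F →+* F} {s c d : F}

/-- The matrix of the `(c, d)` component of the closed butterfly with coefficient `s` and
exponent `x ↦ x * σ x`, as a form which is `σ`-semilinear in one argument and linear in the other;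
see `dotProduct_butterflyMatrix_mulVec`. -/
def butterflyMatrix (σ : F →+* F) (s c d : F) : Matrix (Fin 2) (Fin 2) F :=
  !![c * (s * σ s + 1) + d, c * σ s + d * s; c * s + d * σ s, c + d * (s * σ s + 1)]

lemma dotProduct_butterflyMatrix_mulVec (σ : F →+* F) (s c d x y : F) :
    (σ ∘ ![x, y]) ⬝ᵥ butterflyMatrix σ s c d *ᵥ ![x, y] =
      c * ((s * x + y) * σ (s * x + y) + x * σ x) +
        d * ((x + s * y) * σ (x + s * y) + y * σ y) := by
  simp only [butterflyMatrix, dotProduct, mulVec, Function.comp_apply, of_apply, cons_val',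
    cons_val_fin_one, Fin.sum_univ_two, cons_val_zero, cons_val_one, map_add, map_mul]
  ring

lemma swapMatrix_mul_butterflyMatrix (σ : F →+* F) (s c d : F) :
    swapMatrix F * butterflyMatrix σ s c d =
      !![c * s + d * σ s, c + d * (s * σ s + 1); c * (s * σ s + 1) + d, c * σ s + d * s] := by
  simp [swapMatrix, butterflyMatrix]

variable [CharP F 2]

lemma det_butterflyMatrix :
    (butterflyMatrix σ s c d).det = (c + d) ^ 2 + c * d * (s + σ s + s * σ s) ^ 2 := by
  rw [butterflyMatrix, det_fin_two_of]
  grind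

lemma trace_swapMatrix_mul_butterflyMatrix :
    ((swapMatrix F * butterflyMatrix σ s c d).map σ *
      (swapMatrix F * butterflyMatrix σ s c d)).trace =
      (σ c * d + σ d * c) * (s * σ s ^ 2 * σ (σ s) + (s + σ s) * (σ s + σ (σ s))) := by
  rw [swapMatrix_mul_butterflyMatrix, trace_fin_two]
  simp only [mul_apply, map_apply, Fin.sum_univ_two, of_apply, cons_val_zero, cons_val_one,
    map_add, map_mul, map_one]
  grind

lemma add_map_add_mul_map_ne_zero (hσ : Function.fixedPoints (σ.comp σ) ⊆ {0, 1})
    (hs0 : s ≠ 0) (hs1 : s ≠ 1) : s + σ s + s * σ s ≠ 0 := by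
  intro h
  have hσh : σ s + σ (σ s) + σ s * σ (σ s) = 0 := by simpa using congrArg σ h
  have hfix : σ (σ s) = s := by grind
  rcases hσ hfix with h0 | h1
  exacts [hs0 h0, hs1 h1]

lemma trace_factor_ne_zero (hσ : Function.fixedPoints (σ.comp σ) ⊆ {0, 1})
    (hs0 : s ≠ 0) (hs1 : s ≠ 1) :
    s * σ s ^ 2 * σ (σ s) + (s + σ s) * (σ s + σ (σ s)) ≠ 0 := by
  intro h
  have hσs0 : σ s ≠ 0 := by simpa
  have hσσs0 : σ (σ s) ≠ 0 := by simpa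
  have hE := add_map_add_mul_map_ne_zero hσ hs0 hs1
  -- Dividing by `s σ(s)² σ²(s)` turns the expression into `1 + A σ(A)`.
  set A := s⁻¹ + (σ s)⁻¹ with hA
  have hAσ : A * σ A = 1 := by
    simp only [hA, map_add, map_inv₀]
    field_simp
    grind
  have hfix : σ (σ A) = A := by
    have : σ A * σ (σ A) = 1 := by simpa using congrArg σ hAσ
    grind
  rcases hσ hfix with h0 | h1
  · simp [show A = 0 from h0] at hAσ
  · rw [Set.mem_singleton_iff, hA] at h1
    field_simp at h1
    grind

lemma eq_of_map_mul_add_map_mul_eq_zero (hσ : Function.fixedPoints (σ.comp σ) ⊆ {0, 1})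
    (hc : c ≠ 0) (hd : d ≠ 0) (h : σ c * d + σ d * c = 0) : c = d := by
  have hfix : σ (c / d) = c / d := by
    rw [map_div₀, div_eq_div_iff ((map_ne_zero σ).2 hd) hd]
    grind
  have hfix' : c / d ∈ Function.fixedPoints (σ.comp σ) := by
    change σ (σ (c / d)) = c / d
    rw [hfix, hfix]
  rcases hσ hfix' with h0 | h1
  · exact absurd h0 (div_ne_zero hc hd)
  · exact (div_eq_one_iff_eq hd).1 h1

lemma twistedRadical_butterflyMatrix_subset_of_det_eq_zero
    (hσ : Function.fixedPoints (σ.comp σ) ⊆ {0, 1}) (hs0 : s ≠ 0) (hs1 : s ≠ 1)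
    (hcd : c ≠ 0 ∨ d ≠ 0) (hdet : (butterflyMatrix σ s c d).det = 0) :
    twistedRadical σ (butterflyMatrix σ s c d) ⊆ {0} := by
  refine twistedRadical_subset_of_det_eq_zero hdet fun h => ?_
  rw [det_butterflyMatrix] at hdet
  have hE := add_map_add_mul_map_ne_zero hσ hs0 hs1
  have hc : c ≠ 0 := by
    rintro rfl
    simp_all
  have hd : d ≠ 0 := by
    rintro rfl
    simp_all
  have htrace := congrArg trace h
  rw [trace_swapMatrix_mul_butterflyMatrix, trace_zero, mul_eq_zero] at htrace
  obtain rfl := eq_of_map_mul_add_map_mul_eq_zero hσ hc hd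
    (htrace.resolve_right (trace_factor_ne_zero hσ hs0 hs1))
  rw [CharTwo.add_self_eq_zero, zero_pow two_ne_zero, zero_add] at hdet
  exact mul_ne_zero (mul_ne_zero hc hc) (pow_ne_zero 2 hE) hdet

lemma ncard_twistedRadical_butterflyMatrix_le (hσ : Function.fixedPoints (σ.comp σ) ⊆ {0, 1})
    (hs0 : s ≠ 0) (hs1 : s ≠ 1) (hcd : c ≠ 0 ∨ d ≠ 0) :
    (twistedRadical σ (butterflyMatrix σ s c d)).ncard ≤ 4 := by
  by_cases hdet : (butterflyMatrix σ s c d).det = 0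
  · calc (twistedRadical σ (butterflyMatrix σ s c d)).ncard ≤ ({0} : Set (Fin 2 → F)).ncard :=
          Set.ncard_le_ncard
            (twistedRadical_butterflyMatrix_subset_of_det_eq_zero hσ hs0 hs1 hcd hdet)
      _ ≤ 4 := by simp
  · have hfin : ({0, 1} : Set F).Finite := Set.toFinite _
    calc (twistedRadical σ (butterflyMatrix σ s c d)).ncard
        ≤ (Function.fixedPoints (σ.comp σ)).ncard ^ 2 :=
          ncard_twistedRadical_le hdet (hfin.subset hσ)
      _ ≤ 2 ^ 2 := Nat.pow_le_pow_left ((Set.ncard_le_ncard hσ hfin).trans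
          (Set.ncard_pair zero_ne_one).le) 2

end ButterflyMatrix

section DescProd

/-- The descending product `A (n - 1) * ⋯ * A 1 * A 0`. -/
def descProd {R : Type*} [Monoid R] (A : ℕ → R) : ℕ → R
  | 0 => 1
  | n + 1 => A n * descProd A n

section Monoid

variable {R : Type*} [Monoid R] {A B : ℕ → R}

lemma descProd_congr {n : ℕ} (h : ∀ j < n, A j = B j) : descProd A n = descProd B n := by
  induction n with
  | zero => rfl
  | succ n ih =>
    rw [descProd, descProd, h n n.lt_succ_self, ih fun j hj => h j (hj.trans n.lt_succ_self)]

lemma descProd_add (A : ℕ → R) (m n : ℕ) :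
    descProd A (m + n) = descProd (fun j => A (m + j)) n * descProd A m := by
  induction n with
  | zero => simp [descProd]
  | succ n ih => rw [← add_assoc, descProd, descProd, ih, mul_assoc]

lemma descProd_telescope {g : ℕ → R} (hg : ∀ j, g j * g j = 1) (x : R) (n : ℕ) :
    descProd (fun j => g (j + 1) * x * g j) n = g n * x ^ n * g 0 := by
  induction n with
  | zero => simp [descProd, hg]
  | succ n ih =>
    rw [descProd, ih, pow_succ']
    simp only [mul_assoc]
    rw [← mul_assoc (g n) (g n), hg, one_mul]

end Monoid

lemma descProd_smul_add {K R : Type*} [CommSemiring K] [Semiring R] [Algebra K R] (x : ℕ → K)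
    (C D : ℕ → R) (n : ℕ) :
    descProd (fun j => x j • C j + D j) n =
      ∑ S ∈ (Finset.range n).powerset, (∏ j ∈ S, x j) • descProd (S.piecewise C D) n := by
  induction n with
  | zero => simp [descProd]
  | succ n ih =>
    rw [descProd, ih, Finset.range_add_one, Finset.sum_powerset_insert Finset.notMem_range_self,
      add_mul, add_comm, Finset.mul_sum, Finset.mul_sum]
    congr 1 <;> refine Finset.sum_congr rfl fun S hS => ?_
    all_goals
      have hn : n ∉ S := fun h => Finset.notMem_range_self (Finset.mem_powerset.1 hS h)
    · rw [descProd, Finset.piecewise_eq_of_notMem _ _ _ hn, mul_smul_comm]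
    · have hcongr : descProd ((insert n S).piecewise C D) n = descProd (S.piecewise C D) n :=
        descProd_congr fun j hj => Finset.piecewise_insert_of_ne _ _ _ hj.ne
      rw [descProd, hcongr, Finset.piecewise_insert_self, Finset.prod_insert hn, mul_smul_comm,
        smul_mul_assoc, smul_smul, mul_comm]

lemma det_descProd {ι K : Type*} [Fintype ι] [DecidableEq ι] [CommRing K]
    (A : ℕ → Matrix ι ι K) (n : ℕ) : (descProd A n).det = ∏ j ∈ Finset.range n, (A j).det := by
  induction n with
  | zero => simp [descProd]
  | succ n ih => rw [descProd, det_mul, ih, Finset.prod_range_succ_comm]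

end DescProd

section Iteration

variable {F : Type*} [Field F] {σ : F →+* F}

lemma prod_range_iterate_eq_one (hσ : Function.fixedPoints σ ⊆ {0, 1}) {k : ℕ} {z : F}
    (hk : σ^[k] z = z) (hz : z ≠ 0) : ∏ j ∈ Finset.range k, σ^[j] z = 1 := by
  have hfix : σ (∏ j ∈ Finset.range k, σ^[j] z) = ∏ j ∈ Finset.range k, σ^[j] z := by
    refine mul_right_cancel₀ hz ?_
    calc σ (∏ j ∈ Finset.range k, σ^[j] z) * z = ∏ j ∈ Finset.range (k + 1), σ^[j] z := by
          simp only [map_prod, Finset.prod_range_succ', Function.iterate_succ_apply',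
            Function.iterate_zero_apply]
      _ = (∏ j ∈ Finset.range k, σ^[j] z) * z := by rw [Finset.prod_range_succ, hk]
  refine (hσ hfix).resolve_left (Finset.prod_ne_zero_iff.2 fun j _ => ?_)
  rwa [← RingHom.coe_pow, map_ne_zero]

lemma comp_mulVec_mulVec {ι : Type*} [Fintype ι] (A B : Matrix ι ι F) (u : ι → F) :
    σ ∘ (A *ᵥ B *ᵥ u) = A.map σ *ᵥ B.map σ *ᵥ (σ ∘ u) := by
  ext i
  rw [Function.comp_apply, σ.map_mulVec]
  exact congrFun (congrArg _ (funext (σ.map_mulVec B u))) i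

lemma descProd_map_pow_mulVec {ι : Type*} [Fintype ι] [DecidableEq ι] {M : Matrix ι ι F}
    {u : ι → F} {δ : F} (h : M.map σ *ᵥ M *ᵥ u = δ • (σ ∘ σ ∘ u)) (m : ℕ) :
    descProd (fun j => M.map ⇑(σ ^ j)) (2 * m) *ᵥ u =
      (∏ j ∈ Finset.range m, σ^[2 * j] δ) • (σ^[2 * m] ∘ u) := by
  induction m with
  | zero => simp [descProd]
  | succ m ih =>
    have hstep : M.map ⇑(σ ^ (2 * m + 1)) *ᵥ M.map ⇑(σ ^ (2 * m)) *ᵥ (σ^[2 * m] ∘ u) =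
        σ^[2 * m] δ • (σ^[2 * m + 2] ∘ u) := by
      rw [← RingHom.coe_pow, pow_succ, RingHom.coe_mul, ← Matrix.map_map, ← comp_mulVec_mulVec, h]
      ext i
      simp
    rw [mul_add_one, descProd, descProd, ← mulVec_mulVec, ← mulVec_mulVec, ih, mulVec_smul,
      mulVec_smul, hstep, smul_smul, Finset.prod_range_succ]

variable [CharP F 2]

lemma trace_eq_zero_of_mulVec_mulVec_eq {P : Matrix (Fin 2) (Fin 2) F} (hP : P.det = 1)
    {u : Fin 2 → F} (hu : u ≠ 0) (hPu : P *ᵥ P *ᵥ u = u) : P.trace = 0 := by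
  have hcayley : P.trace • P *ᵥ u = P *ᵥ P *ᵥ u + P.det • u := by
    ext i
    fin_cases i <;>
      simp only [trace_fin_two, det_fin_two, mulVec_fin_two, Fin.zero_eta, Fin.mk_one,
        Pi.smul_apply, Pi.add_apply, cons_val_zero, cons_val_one, cons_val_fin_one,
        smul_eq_mul] <;> grind
  have hzero : P.trace • P *ᵥ u = 0 := by
    rw [hcayley, hPu, hP, one_smul, CharTwo.add_self_eq_zero]
  refine (smul_eq_zero.1 hzero).resolve_right fun h => hu ?_
  rw [← hPu, h, mulVec_zero]

lemma trace_descProd_eq_zero_of_mem_twistedRadical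
    (hσ : Function.fixedPoints (σ.comp σ) ⊆ {0, 1}) {k : ℕ} (hk : σ ^ k = 1)
    {N : Matrix (Fin 2) (Fin 2) F} (hN : N.det ≠ 0) {u : Fin 2 → F} (hu : u ∈ twistedRadical σ N)
    (hu0 : u ≠ 0) : (descProd (fun j => (swapMatrix F * N).map (σ ^ j)) k).trace = 0 := by
  have hσ1 : Function.fixedPoints σ ⊆ {0, 1} := fun x hx => hσ <| by
    rw [RingHom.coe_comp]
    exact Function.IsFixedPt.comp hx hx
  have hiter (z : F) : σ^[k] z = z := by rw [← RingHom.coe_pow, hk, RingHom.coe_one, id]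
  have hiter2 (z : F) : σ^[2 * k] z = z := by rw [two_mul, Function.iterate_add_apply, hiter, hiter]
  have hM : (swapMatrix F * N).det ≠ 0 := by
    rw [det_mul]
    exact mul_ne_zero (by simp [swapMatrix]) hN
  refine trace_eq_zero_of_mulVec_mulVec_eq (u := u) ?_ hu0 ?_
  · rw [det_descProd, ← prod_range_iterate_eq_one hσ1 (hiter _) hM]
    refine Finset.prod_congr rfl fun j _ => ?_
    rw [← RingHom.coe_pow, RingHom.map_det]
    rfl
  · have hnorm : ∏ j ∈ Finset.range k, σ^[2 * j] (σ N.det) = 1 := by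
      simp only [Function.iterate_mul]
      refine prod_range_iterate_eq_one (σ := σ.comp σ) hσ ?_ (by simpa)
      exact (congrFun (Function.iterate_mul σ 2 k) _).symm.trans (hiter2 _)
    have h := descProd_map_pow_mulVec (mulVec_mulVec_of_mem_twistedRadical hu) k
    have hid : σ^[2 * k] ∘ u = u := funext fun i => hiter2 (u i)
    rw [hnorm, one_smul, hid, two_mul, descProd_add, ← mulVec_mulVec] at h
    simpa only [pow_add, hk, one_mul] using h

end Iteration

section DigitSums

variable {k i : ℕ}

lemma injOn_mul_mod (hik : i.Coprime k) :
    Set.InjOn (fun j => i * j % k) (Finset.range k) := by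
  intro a ha b hb hab
  exact (Nat.ModEq.cancel_left_of_coprime hik.symm hab).eq_of_lt_of_lt (Finset.mem_range.1 ha)
    (Finset.mem_range.1 hb)

lemma sum_pow_mul_mod_eq (hik : i.Coprime k) (p : ℕ) {S : Finset ℕ}
    (hS : S ⊆ Finset.range k) :
    ∑ j ∈ S, p ^ (i * j % k) = ∑ n ∈ S.image fun j => i * j % k, p ^ n :=
  (Finset.sum_image ((injOn_mul_mod hik).mono hS)).symm

lemma injOn_sum_pow_mul_mod (hik : i.Coprime k) {p : ℕ} (hp : 2 ≤ p) :
    Set.InjOn (fun S : Finset ℕ => ∑ j ∈ S, p ^ (i * j % k)) ((Finset.range k).powerset) := by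
  intro S hS T hT hST
  refine Finset.image_injOn_powerset_of_injOn (injOn_mul_mod hik) hS hT ?_
  refine Finset.geomSum_injective hp ?_
  simpa only [sum_pow_mul_mod_eq hik p (Finset.mem_powerset.1 hS),
    sum_pow_mul_mod_eq hik p (Finset.mem_powerset.1 hT)] using hST

lemma sum_pow_mul_mod_lt (hik : i.Coprime k) {p : ℕ} (hp : 2 ≤ p) {S : Finset ℕ}
    (hS : S ⊆ Finset.range k) : ∑ j ∈ S, p ^ (i * j % k) < p ^ k := by
  rw [sum_pow_mul_mod_eq hik p hS]
  refine Nat.geomSum_lt hp fun n hn => ?_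
  obtain ⟨j, hj, rfl⟩ := Finset.mem_image.1 hn
  exact Nat.mod_lt _ (Nat.zero_lt_of_lt (Finset.mem_range.1 (hS hj)))

lemma eq_zero_of_forall_sum_pow_mul_eq_zero {R ι : Type*} [CommRing R] [IsDomain R] [Fintype R]
    {s : Finset ι} {e : ι → ℕ} (he : Set.InjOn e s) (hlt : ∀ i ∈ s, e i < Fintype.card R)
    {g : ι → R} (h : ∀ c, ∑ i ∈ s, c ^ e i * g i = 0) {i : ι} (hi : i ∈ s) : g i = 0 := by
  classical
  let P : Polynomial R := ∑ i ∈ s, Polynomial.monomial (e i) (g i)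
  have hdeg : P.natDegree < Fintype.card R := by
    refine (Polynomial.natDegree_sum_le_of_forall_le (n := Fintype.card R - 1) s _ fun j hj =>
      (Polynomial.natDegree_monomial_le _).trans (Nat.le_pred_of_lt (hlt j hj))).trans_lt ?_
    exact Nat.pred_lt Fintype.card_ne_zero
  have hP : P = 0 := by
    refine Polynomial.eq_zero_of_natDegree_lt_card_of_eval_eq_zero P Function.injective_id
      (fun c => ?_) hdeg
    simpa [P, Polynomial.eval_finsetSum, mul_comm] using h c
  calc g i = P.coeff (e i) := by
        rw [Polynomial.finsetSum_coeff, Finset.sum_eq_single_of_mem i hi, Polynomial.coeff_monomial,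
          if_pos rfl]
        exact fun j hj hji => by
          rw [Polynomial.coeff_monomial, if_neg (mt (he hj hi) hji)]
    _ = 0 := by rw [hP, Polynomial.coeff_zero]

end DigitSums

section Frobenius

variable {F : Type*} [Field F] [Fintype F] {p k : ℕ} [Fact p.Prime] [CharP F p]

lemma iterateFrobenius_pow_eq_one (hcard : Fintype.card F = p ^ k) (i : ℕ) :
    iterateFrobenius F p i ^ k = 1 := by
  rw [iterateFrobenius_eq_pow, pow_right_comm, FiniteField.frobenius_pow hcard, one_pow]

lemma iterate_iterateFrobenius_apply (hcard : Fintype.card F = p ^ k) (i j : ℕ) (x : F) :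
    (iterateFrobenius F p i)^[j] x = x ^ p ^ (i * j % k) := by
  rw [← RingHom.coe_pow, iterateFrobenius_eq_pow, ← pow_mul,
    pow_eq_pow_mod _ (FiniteField.frobenius_pow hcard), ← iterateFrobenius_eq_pow,
    iterateFrobenius_def]

lemma fixedPoints_iterateFrobenius_subset [CharP F 2] (hcard : Fintype.card F = 2 ^ k) {i : ℕ}
    (hik : i.Coprime k) : Function.fixedPoints (iterateFrobenius F 2 i) ⊆ {0, 1} := by
  intro x hx
  have hi : Function.IsPeriodicPt (frobenius F 2) i x := by
    rwa [Function.IsPeriodicPt, ← coe_iterateFrobenius]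
  have hk : Function.IsPeriodicPt (frobenius F 2) k x := by
    rw [Function.IsPeriodicPt, ← RingHom.coe_pow, FiniteField.frobenius_pow hcard]
    exact Function.isFixedPt_id x
  have hsq : x ^ 2 = x := by
    have h1 := hi.gcd hk
    rwa [hik.gcd_eq_one] at h1
  exact IsIdempotentElem.iff_eq_zero_or_one.1 (by rwa [IsIdempotentElem, ← sq])

lemma fixedPoints_iterateFrobenius_comp_self_subset [CharP F 2] (hk : Odd k)
    (hcard : Fintype.card F = 2 ^ k) {i : ℕ} (hik : i.Coprime k) :
    Function.fixedPoints ((iterateFrobenius F 2 i).comp (iterateFrobenius F 2 i)) ⊆ {0, 1} := by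
  rw [← iterateFrobenius_add, ← two_mul]
  exact fixedPoints_iterateFrobenius_subset hcard (hk.coprime_two_left.mul_left hik)

theorem eq_zero_of_forall_sum_prod_iterateFrobenius_eq_zero (hcard : Fintype.card F = p ^ k)
    {i : ℕ} (hik : i.Coprime k) {g : Finset ℕ → F}
    (h : ∀ c, ∑ S ∈ (Finset.range k).powerset,
      (∏ j ∈ S, (iterateFrobenius F p i)^[j] c) * g S = 0)
    {S : Finset ℕ} (hS : S ⊆ Finset.range k) : g S = 0 := by
  have hp : 2 ≤ p := (Fact.out : p.Prime).two_le
  refine eq_zero_of_forall_sum_pow_mul_eq_zero (injOn_sum_pow_mul_mod hik hp) (fun T hT => ?_)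
    (fun c => ?_) (Finset.mem_powerset.2 hS)
  · rw [hcard]
    exact sum_pow_mul_mod_lt hik hp (Finset.mem_powerset.1 hT)
  · simpa only [iterate_iterateFrobenius_apply hcard, Finset.prod_pow_eq_pow_sum] using h c

end Frobenius

section BentComponent

variable {F : Type*} [Field F] {σ : F →+* F} {s : F}

lemma map_swapMatrix_mul_butterflyMatrix_one (σ τ : F →+* F) (s c : F) :
    (swapMatrix F * butterflyMatrix σ s c 1).map τ =
      τ c • (swapMatrix F * butterflyMatrix σ s 1 0).map τ +
        (swapMatrix F * butterflyMatrix σ s 0 1).map τ := by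
  simp only [swapMatrix_mul_butterflyMatrix]
  ext i j
  fin_cases i <;> fin_cases j <;> simp

lemma map_swapMatrix_mul_butterflyMatrix_zero_one (τ : F →+* F) :
    (swapMatrix F * butterflyMatrix σ s 0 1).map τ =
      transvection 0 1 (τ (σ s)) * swapMatrix F * transvection 0 1 (τ s) := by
  rw [swapMatrix_mul_butterflyMatrix]
  ext i j
  fin_cases i <;> fin_cases j <;>
    simp [transvection, swapMatrix, mul_apply, Fin.sum_univ_two, mul_comm]

variable [CharP F 2]

lemma descProd_map_pow_swapMatrix_mul_butterflyMatrix_zero_one (σ : F →+* F) (s : F) {m : ℕ}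
    (hm : Even m) :
    descProd (fun j => (swapMatrix F * butterflyMatrix σ s 0 1).map ⇑(σ ^ (1 + j))) m =
      transvection 0 1 (σ^[m + 1] s + σ s) := by
  have hsq (j : ℕ) :
      transvection (0 : Fin 2) 1 (σ^[j + 1] s) * transvection 0 1 (σ^[j + 1] s) = 1 := by
    rw [transvection_mul_transvection_same _ _ zero_ne_one, CharTwo.add_self_eq_zero,
      transvection_zero]
  have hpow : swapMatrix F ^ m = 1 := by
    obtain ⟨r, rfl⟩ := hm
    rw [← two_mul, pow_mul, sq, swapMatrix_mul_self, one_pow]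
  have hterm (j : ℕ) : (swapMatrix F * butterflyMatrix σ s 0 1).map ⇑(σ ^ (1 + j)) =
      transvection 0 1 (σ^[j + 1 + 1] s) * swapMatrix F * transvection 0 1 (σ^[j + 1] s) := by
    rw [map_swapMatrix_mul_butterflyMatrix_zero_one, RingHom.coe_pow, add_comm 1 j,
      ← Function.iterate_succ_apply]
  simp only [hterm]
  rw [descProd_telescope hsq, hpow, mul_one, transvection_mul_transvection_same _ _ zero_ne_one]
  rfl

lemma trace_descProd_piecewise_zero {k : ℕ} (hk : Odd k) (hσk : σ ^ k = 1) :
    (descProd (({0} : Finset ℕ).piecewise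
      (fun j => (swapMatrix F * butterflyMatrix σ s 1 0).map ⇑(σ ^ j))
      (fun j => (swapMatrix F * butterflyMatrix σ s 0 1).map ⇑(σ ^ j))) k).trace =
      (s + σ s) * (s * σ s) := by
  obtain ⟨m, rfl⟩ := hk
  have hs : σ^[2 * m + 1] s = s := by rw [← RingHom.coe_pow, hσk, RingHom.coe_one, id]
  rw [add_comm (2 * m) 1, descProd_add]
  have htail : descProd (fun j => ({0} : Finset ℕ).piecewise
      (fun j => (swapMatrix F * butterflyMatrix σ s 1 0).map ⇑(σ ^ j))
      (fun j => (swapMatrix F * butterflyMatrix σ s 0 1).map ⇑(σ ^ j)) (1 + j)) (2 * m) =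
      transvection 0 1 (s + σ s) := by
    simp only [Finset.piecewise_eq_of_notMem, Finset.mem_singleton, Nat.add_eq_zero_iff,
      one_ne_zero, false_and, not_false_eq_true]
    rw [descProd_map_pow_swapMatrix_mul_butterflyMatrix_zero_one σ s (even_two_mul m), hs]
  rw [htail, descProd, descProd, mul_one, Finset.piecewise_eq_of_mem _ _ _ (by simp),
    swapMatrix_mul_butterflyMatrix, trace_fin_two]
  simp only [transvection, pow_zero, RingHom.coe_one, map_id, mul_apply, Matrix.add_apply, of_apply,
    cons_val', cons_val_zero, cons_val_one, cons_val_fin_one, Fin.sum_univ_two, one_apply_eq, ne_eq,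
    one_ne_zero, zero_ne_one, and_false, false_and, not_false_eq_true, one_apply_ne,
    single_apply_of_ne, single_apply_same]
  grind

theorem exists_twistedRadical_butterflyMatrix_subset [Fintype F] {k i : ℕ} (hk : Odd k)
    (hcard : Fintype.card F = 2 ^ k) (hik : i.Coprime k) (hs0 : s ≠ 0) (hs1 : s ≠ 1) :
    ∃ c, twistedRadical (iterateFrobenius F 2 i)
      (butterflyMatrix (iterateFrobenius F 2 i) s c 1) ⊆ {0} := by
  set σ := iterateFrobenius F 2 i
  have hσ := fixedPoints_iterateFrobenius_comp_self_subset hk hcard hik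
  have hσk : σ ^ k = 1 := iterateFrobenius_pow_eq_one hcard i
  by_contra! hrad
  have htrace (c : F) :
      (descProd (fun j => (swapMatrix F * butterflyMatrix σ s c 1).map ⇑(σ ^ j)) k).trace = 0 := by
    obtain ⟨u, hu, hu0⟩ := Set.not_subset.1 (hrad c)
    have hdet : (butterflyMatrix σ s c 1).det ≠ 0 := fun h => hrad c <|
      twistedRadical_butterflyMatrix_subset_of_det_eq_zero hσ hs0 hs1 (.inr one_ne_zero) h
    exact trace_descProd_eq_zero_of_mem_twistedRadical hσ hσk hdet hu hu0
  have hsum (c : F) : ∑ S ∈ (Finset.range k).powerset, (∏ j ∈ S, σ^[j] c) *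
      (descProd (S.piecewise
        (fun j => (swapMatrix F * butterflyMatrix σ s 1 0).map ⇑(σ ^ j))
        (fun j => (swapMatrix F * butterflyMatrix σ s 0 1).map ⇑(σ ^ j))) k).trace = 0 := by
    have h := htrace c
    rw [funext fun j => map_swapMatrix_mul_butterflyMatrix_one σ (σ ^ j) s c, descProd_smul_add,
      trace_sum] at h
    simpa only [trace_smul, RingHom.coe_pow, smul_eq_mul] using h
  have hcoeff := eq_zero_of_forall_sum_prod_iterateFrobenius_eq_zero hcard hik hsum
    (Finset.singleton_subset_iff.2 (Finset.mem_range.2 hk.pos))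
  rw [trace_descProd_piecewise_zero hk hσk] at hcoeff
  have hσs : s + σ s ≠ 0 := fun h => by
    rcases fixedPoints_iterateFrobenius_subset hcard hik (CharTwo.add_eq_zero.1 h).symm with h | h
    exacts [hs0 h, hs1 h]
  exact mul_ne_zero hσs (mul_ne_zero hs0 (by simpa)) hcoeff

end BentComponent

section ButterflySum

lemma abs_mem_of_sq_eq_sq_mul {w q : ℤ} (hq : 0 < q) {r : ℕ} (hr : r ≤ 4)
    (hw : w ^ 2 = q ^ 2 * r) : |w| ∈ ({0, q, 2 * q} : Set ℤ) := by
  obtain ⟨m, rfl⟩ := (Int.pow_dvd_pow_iff two_ne_zero).1 (Dvd.intro _ hw.symm)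
  have hm : m ^ 2 = r := by
    rw [mul_pow] at hw
    exact mul_left_cancel₀ (pow_pos hq 2).ne' hw
  have hm2 : |m| ≤ 2 := abs_le_of_sq_le_sq (by rw [hm]; exact_mod_cast hr) zero_le_two
  rw [abs_mul, abs_of_pos hq]
  have hm0 := abs_nonneg m
  interval_cases |m| <;> simp [mul_comm]

variable {F : Type*} [Field F] [CharP F 2] {χ : AddChar F ℤ} {σ : F →+* F} {s c d : F}

lemma mem_twistedRadical_butterflyMatrix_one_zero {u : Fin 2 → F} :
    u ∈ twistedRadical σ (butterflyMatrix σ s 1 0) ↔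
      σ.comp σ (u 0) = u 0 ∧ σ.comp σ (s * u 0 + u 1) = s * u 0 + u 1 := by
  simp only [twistedRadical, Set.mem_ofPred_eq, funext_iff, Fin.forall_fin_two, butterflyMatrix,
    mulVec_fin_two, transpose_apply, map_apply, of_apply, cons_val', cons_val_zero, cons_val_one,
    cons_val_fin_one, map_add, map_mul, map_one, map_zero, Function.comp_apply, Pi.add_apply,
    Pi.zero_apply, RingHom.coe_comp]
  grind

lemma ncard_twistedRadical_butterflyMatrix_one_zero :
    (twistedRadical σ (butterflyMatrix σ s 1 0)).ncard =
      (Function.fixedPoints (σ.comp σ)).ncard ^ 2 := by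
  have himage : twistedRadical σ (butterflyMatrix σ s 1 0) =
      (fun v : F × F => ![v.1, s * v.1 + v.2]) ''
        (Function.fixedPoints (σ.comp σ) ×ˢ Function.fixedPoints (σ.comp σ)) := by
    ext u
    rw [mem_twistedRadical_butterflyMatrix_one_zero]
    constructor
    · rintro ⟨h0, h1⟩
      refine ⟨(u 0, s * u 0 + u 1), ⟨h0, h1⟩, ?_⟩
      ext i
      fin_cases i <;> simp [← add_assoc, CharTwo.add_self_eq_zero]
    · rintro ⟨⟨x, z⟩, ⟨hx, hz⟩, rfl⟩
      have hz' : s * x + (s * x + z) = z := by rw [← add_assoc, CharTwo.add_self_eq_zero, zero_add]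
      exact ⟨hx, (congrArg _ hz').trans (Eq.trans hz hz'.symm)⟩
  rw [himage, Set.ncard_image_of_injective, Set.ncard_prod, sq]
  rintro ⟨x, z⟩ ⟨x', z'⟩ h
  obtain ⟨rfl, hz⟩ : x = x' ∧ s * x + z = s * x' + z' := by simpa using h
  rw [add_left_cancel hz]

lemma twistedQuadSign_butterflyMatrix_one_zero_eq_one
    (hσ : Function.fixedPoints (σ.comp σ) ⊆ {0, 1}) (χ : AddChar F ℤ) (u : Fin 2 → F)
    (hu : u ∈ twistedRadical σ (butterflyMatrix σ s 1 0)) :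
    twistedQuadSign χ σ (butterflyMatrix σ s 1 0) ![1 + s, 1] u = 1 := by
  have hself {z : F} (hz : σ.comp σ z = z) : z * σ z = z := by
    rcases hσ hz with rfl | rfl <;> simp
  obtain ⟨x, y, rfl⟩ : ∃ x y, u = ![x, y] := ⟨u 0, u 1, by ext i; fin_cases i <;> rfl⟩
  obtain ⟨hx, hz⟩ := mem_twistedRadical_butterflyMatrix_one_zero.1 hu
  simp only [cons_val_zero, cons_val_one] at hx hz
  rw [twistedQuadSign, dotProduct_butterflyMatrix_mulVec, hself hx, hself hz, vec2_dotProduct',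
    ← χ.map_zero_eq_one]
  grind

variable [Fintype F]

lemma abs_sum_twistedQuadSign_butterflyMatrix_mem
    (hσ : Function.fixedPoints (σ.comp σ) ⊆ {0, 1}) (hχ : χ ≠ 1) (hχσ : ∀ x, χ (σ x) = χ x)
    (hs0 : s ≠ 0) (hs1 : s ≠ 1) (hcd : c ≠ 0 ∨ d ≠ 0) (a : Fin 2 → F) :
    |∑ u, twistedQuadSign χ σ (butterflyMatrix σ s c d) a u| ∈
      ({0, (Fintype.card F : ℤ), 2 * (Fintype.card F : ℤ)} : Set ℤ) := by
  rcases sum_twistedQuadSign_eq_zero_or_sq hχ hχσ (butterflyMatrix σ s c d) a with h | h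
  · simp [h]
  · exact abs_mem_of_sq_eq_sq_mul (Nat.cast_pos.2 Fintype.card_pos)
      (ncard_twistedRadical_butterflyMatrix_le hσ hs0 hs1 hcd) h

lemma sum_twistedQuadSign_butterflyMatrix_one_zero_eq_zero (hχσ : ∀ x, χ (σ x) = χ x)
    (hχ1 : χ 1 ≠ 1) (s : F) :
    ∑ u, twistedQuadSign χ σ (butterflyMatrix σ s 1 0) ![0, 0] u = 0 := by
  refine sum_twistedQuadSign_eq_zero hχσ (u := ![0, 1])
    (mem_twistedRadical_butterflyMatrix_one_zero.2 (by simp)) ?_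
  rw [twistedQuadSign, dotProduct_butterflyMatrix_mulVec]
  simpa using hχ1

lemma abs_sum_twistedQuadSign_butterflyMatrix_one_zero
    (hσ : Function.fixedPoints (σ.comp σ) ⊆ {0, 1}) (hχ : χ ≠ 1) (hχσ : ∀ x, χ (σ x) = χ x)
    (s : F) :
    |∑ u, twistedQuadSign χ σ (butterflyMatrix σ s 1 0) ![1 + s, 1] u| =
      2 * Fintype.card F := by
  have hfix : Function.fixedPoints (σ.comp σ) = {0, 1} := by
    refine hσ.antisymm ?_
    rintro x (rfl | rfl)
    exacts [map_zero (σ.comp σ), map_one (σ.comp σ)]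
  have hsq := sum_twistedQuadSign_sq_of_eq_one hχ hχσ
    (twistedQuadSign_butterflyMatrix_one_zero_eq_one (s := s) hσ χ)
  rw [ncard_twistedRadical_butterflyMatrix_one_zero, hfix, Set.ncard_pair zero_ne_one,
    Fintype.card_fin] at hsq
  rw [← abs_of_nonneg (show (0 : ℤ) ≤ 2 * Fintype.card F by positivity)]
  refine (sq_eq_sq_iff_abs_eq_abs _ _).1 (hsq.trans ?_)
  push_cast
  ring

theorem setOf_abs_sum_twistedQuadSign_butterflyMatrix {k i : ℕ} (hk : Odd k)
    (hcard : Fintype.card F = 2 ^ k) (hik : i.Coprime k) (hs0 : s ≠ 0) (hs1 : s ≠ 1)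
    (hχσ : ∀ x, χ (iterateFrobenius F 2 i x) = χ x) (hχ1 : χ 1 ≠ 1) :
    {m : ℤ | ∃ a b c d, (c, d) ≠ (0, 0) ∧ m = |∑ u, twistedQuadSign χ (iterateFrobenius F 2 i)
      (butterflyMatrix (iterateFrobenius F 2 i) s c d) ![a, b] u|} =
      {0, (Fintype.card F : ℤ), 2 * (Fintype.card F : ℤ)} := by
  have hσ := fixedPoints_iterateFrobenius_comp_self_subset hk hcard hik
  have hχ : χ ≠ 1 := by
    rintro rfl
    exact hχ1 rfl
  ext m
  constructor
  · rintro ⟨a, b, c, d, hcd, rfl⟩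
    exact abs_sum_twistedQuadSign_butterflyMatrix_mem hσ hχ hχσ hs0 hs1
      (by simpa [imp_iff_not_or] using hcd) ![a, b]
  · rintro (rfl | rfl | rfl)
    · refine ⟨0, 0, 1, 0, by simp, ?_⟩
      rw [sum_twistedQuadSign_butterflyMatrix_one_zero_eq_zero hχσ hχ1 s, abs_zero]
    · obtain ⟨c, hc⟩ := exists_twistedRadical_butterflyMatrix_subset hk hcard hik hs0 hs1
      refine ⟨0, 0, c, 1, by simp, ?_⟩
      have hsq := sum_twistedQuadSign_sq_of_twistedRadical_subset hχ hχσ hc ![0, 0]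
      rw [Fintype.card_fin] at hsq
      rw [(sq_eq_sq_iff_abs_eq_abs _ _).1 hsq, Nat.abs_cast]
    · exact ⟨1 + s, 1, 1, 0, by simp,
        (abs_sum_twistedQuadSign_butterflyMatrix_one_zero hσ hχ hχσ s).symm⟩

end ButterflySum

section TraceSign

variable (F : Type*) [Field F] [Algebra (ZMod 2) F]

/-- The canonical additive character `x ↦ (-1) ^ Tr x` of a field of characteristic two, with
`Tr` the trace down to the prime field. -/
noncomputable def traceSign : AddChar F ℤ :=
  (AddChar.zmodChar 2 (neg_one_sq : (-1 : ℤ) ^ 2 = 1)).compAddMonoidHom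
    (Algebra.trace (ZMod 2) F).toAddMonoidHom

variable {F}

lemma traceSign_apply (x : F) : traceSign F x = (-1) ^ (Algebra.trace (ZMod 2) F x).val := rfl

lemma traceSign_eq_ite (x : F) :
    traceSign F x = if Algebra.trace (ZMod 2) F x = 0 then 1 else -1 := by
  rw [traceSign_apply]
  generalize Algebra.trace (ZMod 2) F x = y
  revert y
  decide

lemma traceSign_iterateFrobenius [Finite F] [CharP F 2] (n : ℕ) (x : F) :
    traceSign F (iterateFrobenius F 2 n x) = traceSign F x := by
  have hfrob : iterateFrobenius F 2 n x =
      (FiniteField.frobeniusAlgEquivOfAlgebraic (ZMod 2) F ^ n) x := by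
    rw [iterateFrobenius_def, AlgEquiv.coe_pow,
      FiniteField.coe_frobeniusAlgEquivOfAlgebraic_iterate, ZMod.card]
  rw [traceSign_apply, traceSign_apply, hfrob, Algebra.trace_eq_of_algEquiv]

lemma traceSign_one (h : Odd (Module.finrank (ZMod 2) F)) : traceSign F 1 = -1 := by
  have : Algebra.trace (ZMod 2) F 1 = 1 := by
    rw [← map_one (algebraMap (ZMod 2) F), Algebra.trace_algebraMap, nsmul_one]
    exact ZMod.natCast_eq_one_iff_odd.2 h
  rw [traceSign_apply, this, ZMod.val_one, pow_one]

end TraceSign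

section GaloisField

variable {k : ℕ}

lemma absTrace_eq_algebraMap_trace (hk : k ≠ 0) (x : GaloisField 2 k) :
    absTrace k x = algebraMap (ZMod 2) _ (Algebra.trace (ZMod 2) (GaloisField 2 k) x) := by
  rw [FiniteField.algebraMap_trace_eq_sum_pow, GaloisField.finrank 2 hk, Nat.card_zmod, absTrace]

lemma ite_absTrace_eq_traceSign (hk : k ≠ 0) (x : GaloisField 2 k)
    [Decidable (absTrace k x = 0)] :
    (if absTrace k x = 0 then 1 else -1 : ℤ) = traceSign (GaloisField 2 k) x := by
  rw [traceSign_eq_ite]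
  simp only [absTrace_eq_algebraMap_trace hk, map_eq_zero]

lemma butterflyWalsh_eq_sum_twistedQuadSign (hk : k ≠ 0) (i t : ℕ) (s a b c d : GaloisField 2 k) :
    butterflyWalsh k ((2 ^ i + 1) * 2 ^ t) s a b (c ^ 2 ^ t) (d ^ 2 ^ t) =
      ∑ u, twistedQuadSign (traceSign (GaloisField 2 k)) (iterateFrobenius (GaloisField 2 k) 2 i)
        (butterflyMatrix (iterateFrobenius (GaloisField 2 k) 2 i) s c d) ![a, b] u := by
  set σ := iterateFrobenius (GaloisField 2 k) 2 i
  have hpow (z : GaloisField 2 k) : z ^ ((2 ^ i + 1) * 2 ^ t) = (z * σ z) ^ 2 ^ t := by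
    rw [pow_mul, pow_succ', iterateFrobenius_def]
  have hform (x y : GaloisField 2 k) :
      c ^ 2 ^ t * ((s * x + y) ^ ((2 ^ i + 1) * 2 ^ t) + x ^ ((2 ^ i + 1) * 2 ^ t)) +
        d ^ 2 ^ t * ((x + s * y) ^ ((2 ^ i + 1) * 2 ^ t) + y ^ ((2 ^ i + 1) * 2 ^ t)) =
      iterateFrobenius (GaloisField 2 k) 2 t
        ((σ ∘ ![x, y]) ⬝ᵥ butterflyMatrix σ s c d *ᵥ ![x, y]) := by
    rw [dotProduct_butterflyMatrix_mulVec, iterateFrobenius_def]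
    simp only [hpow, add_pow_char_pow, mul_pow]
  rw [butterflyWalsh, ← (finTwoArrowEquiv (GaloisField 2 k)).symm.sum_comp,
    Fintype.sum_prod_type]
  refine Finset.sum_congr rfl fun x _ => Finset.sum_congr rfl fun y _ => ?_
  rw [ite_absTrace_eq_traceSign hk, hform, add_assoc, AddChar.map_add_eq_mul,
    traceSign_iterateFrobenius, ← AddChar.map_add_eq_mul, finTwoArrowEquiv_symm_apply,
    twistedQuadSign, vec2_dotProduct']

lemma setOf_abs_butterflyWalsh (hk : k ≠ 0) (i t : ℕ) (s : GaloisField 2 k) :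
    {m : ℤ | ∃ a b c d : GaloisField 2 k, (c, d) ≠ (0, 0) ∧
      m = |butterflyWalsh k ((2 ^ i + 1) * 2 ^ t) s a b c d|} =
    {m : ℤ | ∃ a b c d : GaloisField 2 k, (c, d) ≠ (0, 0) ∧
      m = |∑ u, twistedQuadSign (traceSign (GaloisField 2 k))
        (iterateFrobenius (GaloisField 2 k) 2 i)
        (butterflyMatrix (iterateFrobenius (GaloisField 2 k) 2 i) s c d) ![a, b] u|} := by
  have hsurj := (bijective_iterateFrobenius (GaloisField 2 k) 2 t).surjective
  have hne (c d : GaloisField 2 k) : (c ^ 2 ^ t, d ^ 2 ^ t) ≠ (0, 0) ↔ (c, d) ≠ (0, 0) := by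
    simp
  ext m
  refine exists_congr fun a => exists_congr fun b => hsurj.exists.trans <| exists_congr fun c =>
    hsurj.exists.trans <| exists_congr fun d => ?_
  rw [iterateFrobenius_def, iterateFrobenius_def, hne, butterflyWalsh_eq_sum_twistedQuadSign hk]

end GaloisField

/-- Theorem 3.7 (Walsh spectrum): for `k ≥ 3` odd, `gcd(i,k) = 1`, exponent
`e = (2^i+1)·2^t` and coefficient `α ≠ 0, 1`, the set of absolute values of the Walsh
transform of the closed butterfly over `(c,d) ≠ (0,0)` is exactly `{0, 2^k, 2^(k+1)}`. -/
theorem closedButterfly_walsh_spectrum (k i t : ℕ) (hk : Odd k) (hk3 : 3 ≤ k)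
    (hipos : 0 < i) (hgcd : Nat.gcd i k = 1) (ht : t ≤ k - 1)
    (α : GaloisField 2 k) (hα0 : α ≠ 0) (hα1 : α ≠ 1) :
    {m : ℤ | ∃ a b c d : GaloisField 2 k, (c, d) ≠ (0, 0) ∧
        m = |butterflyWalsh k ((2 ^ i + 1) * 2 ^ t) α a b c d|}
      = {0, 2 ^ k, 2 ^ (k + 1)} := by
  have hk0 : k ≠ 0 := hk.pos.ne'
  have hcard : Fintype.card (GaloisField 2 k) = 2 ^ k := by
    rw [← Nat.card_eq_fintype_card, GaloisField.card 2 k hk0]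
  have hχ1 : traceSign (GaloisField 2 k) 1 ≠ 1 := by
    rw [traceSign_one (by rwa [GaloisField.finrank 2 hk0])]
    decide
  have hspectrum := setOf_abs_sum_twistedQuadSign_butterflyMatrix hk hcard hgcd hα0 hα1
    (traceSign_iterateFrobenius i) hχ1
  rw [hcard, Nat.cast_pow, Nat.cast_ofNat, ← pow_succ'] at hspectrum
  rw [setOf_abs_butterflyWalsh hk0, hspectrum]
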